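/- arXiv:1405.4453 — 3 statements merged into one kernel-verified Lean document; each statement's English description precedes it below -/
import Mathlib

section
/- Let (R, 𝔪, k) be a commutative noetherian Cohen–Macaulay local ring of Krull dimension d. Then R is Gorenstein (equivalently, Ext_R^{d+1}(k, R) = 0) if and only if the R-module Ext_R^{d+1}(k, R) has finite projective dimension. -/
open CategoryTheory

universe u

/-- `ProjDimLE R n M` : `M` admits a resolution of length `n` by finitely generated free
`R`-modules ending in a finitely generated projective module. -/
def ProjDimLE (R : Type u) [CommRing R] : ℕ → ∀ (M : Type u) [AddCommGroup M] [Module R M], Prop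
  | 0, M, _, _ => Module.Projective R M ∧ Module.Finite R M
  | n + 1, M, _, _ => ∃ (k : ℕ) (f : (Fin k → R) →ₗ[R] M),
      Function.Surjective f ∧ ProjDimLE R n (LinearMap.ker f)

/-- `M` admits a finite resolution by finitely generated projective `R`-modules. -/
def HasFiniteProjDim (R : Type u) [CommRing R] (M : Type u) [AddCommGroup M] [Module R M] :
    Prop :=
  ∃ n, ProjDimLE R n M

/-- The Ext module `Ext_R^n(M, N)` of `R`-modules. -/
noncomputable def ExtMod (R : Type u) [CommRing R] (n : ℕ) (M N : Type u)
    [AddCommGroup M] [Module R M] [AddCommGroup N] [Module R N] : ModuleCat R :=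
  ((Ext R (ModuleCat R) n).obj (Opposite.op (ModuleCat.of R M))).obj (ModuleCat.of R N)

set_option linter.unusedVariables false
open RingTheory.Sequence Pointwise


theorem reg_ker {R : Type u} [CommRing R] (rs : List R) : ∀ (s : ℕ) {K F M : Type u}
    [AddCommGroup K] [Module R K] [AddCommGroup F] [Module R F] [AddCommGroup M] [Module R M]
    (i : K →ₗ[R] F) (p : F →ₗ[R] M) (hi : Function.Injective i) (hip : Function.Exact i p)
    (hp : Function.Surjective p) (hF : IsWeaklyRegular F (rs.take (s + 1)))
    (hM : IsWeaklyRegular M (rs.take s)), IsWeaklyRegular K (rs.take (s + 1)) := by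
  induction rs with
  | nil => intros; simp
  | cons a rs ih =>
    intro s K F M _ _ _ _ _ _ i p hi hip hp hF hM
    rw [List.take_succ_cons, isWeaklyRegular_cons_iff] at hF ⊢
    have hK : IsSMulRegular K a := fun x y h => hi (hF.1 (by
      simpa using congrArg i h))
    refine ⟨hK, ?_⟩
    cases s with
    | zero => simp
    | succ s =>
      rw [List.take_succ_cons, isWeaklyRegular_cons_iff] at hM
      refine ih s (QuotSMulTop.map a i) (QuotSMulTop.map a p) ?_ (QuotSMulTop.map_exact a hip hp)
        (QuotSMulTop.map_surjective a hp) hF.2 hM.2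
      rw [injective_iff_map_eq_zero]
      intro x
      obtain ⟨x, rfl⟩ := Submodule.Quotient.mk_surjective _ x
      intro h
      rw [QuotSMulTop.map_apply_mk, Submodule.Quotient.mk_eq_zero,
        Submodule.mem_smul_pointwise_iff_exists] at h
      obtain ⟨f, -, hf⟩ := h
      have h1 : p f = 0 := hM.1 (by
        have : p (a • f) = 0 := by rw [hf]; exact (hip _).2 ⟨x, rfl⟩
        simpa using this)
      obtain ⟨z, rfl⟩ := (hip f).1 h1
      rw [Submodule.Quotient.mk_eq_zero, Submodule.mem_smul_pointwise_iff_exists]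
      exact ⟨z, trivial, hi (by simpa using hf)⟩

theorem reg_ker_length {R : Type u} [CommRing R] (rs : List R) {K F M : Type u}
    [AddCommGroup K] [Module R K] [AddCommGroup F] [Module R F] [AddCommGroup M] [Module R M]
    (i : K →ₗ[R] F) (p : F →ₗ[R] M) (hi : Function.Injective i) (hip : Function.Exact i p)
    (hp : Function.Surjective p) (hF : IsWeaklyRegular F rs)
    (hM : IsWeaklyRegular M rs) : IsWeaklyRegular K rs := by
  have := reg_ker rs rs.length i p hi hip hp
  rw [List.take_of_length_le (by simp), List.take_of_length_le (by simp)] at this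
  exact this hF hM

theorem exists_max_reg (R : Type u) [CommRing R] [IsNoetherianRing R]
    [IsLocalRing R] (d : ℕ) (hdim : ringKrullDim R = d) :
    ∃ rs : List R, rs.length ≤ d ∧ IsWeaklyRegular R rs ∧ 
      ∃ y ∉ Ideal.ofList rs, ∀ r ∈ IsLocalRing.maximalIdeal R, r * y ∈ Ideal.ofList rs := by
  by_contra hcon
  push Not at hcon
  have len : ∀ rs : List R, (∀ r ∈ rs, r ∈ IsLocalRing.maximalIdeal R) →
      IsWeaklyRegular R rs → rs.length ≤ d := by
    intro rs hrs h
    have h1 := IsRegular.of_isWeaklyRegular_of_mem_maximalIdeal (L := R) hrs h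
    have h2 := ringKrullDim_add_length_eq_ringKrullDim_of_isRegular rs h1
    rw [hdim] at h2
    have : Nontrivial (R ⧸ Ideal.ofList rs) := by
      rw [Ideal.Quotient.nontrivial_iff]
      simpa using h1.top_ne_smul.symm
    have h3 : (0 : WithBot ℕ∞) ≤ ringKrullDim (R ⧸ Ideal.ofList rs) := ringKrullDim_nonneg_of_nontrivial
    have h4 : ((rs.length : ℕ) : WithBot ℕ∞) ≤ d := by
      rw [← h2]; exact le_add_of_nonneg_left h3
    exact_mod_cast h4
  have ex : ∀ t : ℕ, ∃ rs : List R, rs.length = t ∧ (∀ r ∈ rs, r ∈ IsLocalRing.maximalIdeal R) ∧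
      IsWeaklyRegular R rs := by
    intro t
    induction t with
    | zero => exact ⟨[], by simp⟩
    | succ t ih =>
      obtain ⟨rs, rfl, hm, hr⟩ := ih
      suffices h : ∃ x ∈ IsLocalRing.maximalIdeal R,
          IsSMulRegular (R ⧸ (Ideal.ofList rs • ⊤ : Submodule R R)) x by
        obtain ⟨x, hx, hxr⟩ := h
        refine ⟨rs ++ [x], by simp, ?_, ?_⟩
        · intro r h
          rcases List.mem_append.1 h with h | h
          · exact hm r h
          · simp at h; exact h ▸ hx
        · rw [isWeaklyRegular_append_iff, isWeaklyRegular_singleton_iff]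
          exact ⟨hr, hxr⟩
      have hs : Subsingleton ((R ⧸ IsLocalRing.maximalIdeal R) →ₗ[R]
          (R ⧸ (Ideal.ofList rs • ⊤ : Submodule R R))) := by
        refine subsingleton_of_forall_eq 0 fun φ => ?_
        obtain ⟨y, hy⟩ := Submodule.Quotient.mk_surjective _ (φ 1)
        have key : y ∈ Ideal.ofList rs := by
          by_contra hy'
          obtain ⟨r, hr1, hr2⟩ := hcon rs (len rs hm hr) hr y hy'
          apply hr2
          have : r • φ 1 = 0 := by
            rw [← map_smul]
            have : r • (1 : R ⧸ IsLocalRing.maximalIdeal R) = 0 := by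
              rw [Algebra.smul_def, mul_one]
              exact Ideal.Quotient.eq_zero_iff_mem.2 hr1
            rw [this, map_zero]
          rw [← hy, ← Submodule.Quotient.mk_smul, Submodule.Quotient.mk_eq_zero] at this
          simpa using this
        have h1 : φ 1 = 0 := by
          rw [← hy, Submodule.Quotient.mk_eq_zero]; simpa using key
        ext
        exact h1
      obtain ⟨x, hx, hx'⟩ := IsSMulRegular.subsingleton_linearMap_iff.1 hs
      exact ⟨x, by rwa [Ideal.annihilator_quotient] at hx, hx'⟩
  obtain ⟨rs, h1, h2, h3⟩ := ex (d + 1)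
  have := len rs h2 h3
  omega

theorem weaklyRegular_free {R : Type u} [CommRing R] {rs : List R} (h : IsWeaklyRegular R rs)
    (F : Type u) [AddCommGroup F] [Module R F] [Module.Free R F] : IsWeaklyRegular F rs :=
  ((TensorProduct.rid R F).isWeaklyRegular_congr rs).1 (h.isWeaklyRegular_lTensor (M₂ := F))

theorem split_of_socle {R : Type u} [CommRing R] [IsLocalRing R] [IsNoetherianRing R] (rs : List R)
    (y : R) (hy : y ∉ Ideal.ofList rs)
    (hy' : ∀ r ∈ IsLocalRing.maximalIdeal R, r * y ∈ Ideal.ofList rs)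
    {K F M : Type u} [AddCommGroup K] [Module R K] [AddCommGroup F] [Module R F]
    [AddCommGroup M] [Module R M] [Module.Free R K] [Module.Finite R K] [Module.Free R F]
    [Module.Finite R F]
    (i : K →ₗ[R] F) (p : F →ₗ[R] M) (hi : Function.Injective i) (hip : Function.Exact i p)
    (hp : Function.Surjective p) (hM : IsWeaklyRegular M rs) : Module.Projective R M := by
  have hinj : ∀ v : K, i v ∈ (Ideal.ofList rs • ⊤ : Submodule R F) →
      v ∈ (Ideal.ofList rs • ⊤ : Submodule R K) := by
    intro v hv
    have h0 : Function.Exact (0 : K →ₗ[R] K) i := by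
      intro x
      simp only [LinearMap.zero_apply, Set.mem_range, exists_const]
      exact ⟨fun h => (hi (h.trans (map_zero i).symm)).symm, fun h => by rw [← h, map_zero]⟩
    have h := map_first_exact_on_four_term_right_exact_of_isSMulRegular_last h0 hip hp hM
    obtain ⟨z, hz⟩ := (h (Submodule.Quotient.mk v)).1 (by
      rw [Submodule.mapQ_apply, Submodule.Quotient.mk_eq_zero]; exact hv)
    obtain ⟨z, rfl⟩ := Submodule.Quotient.mk_surjective _ z
    rw [Submodule.mapQ_apply, LinearMap.zero_apply, Submodule.Quotient.mk_zero] at hz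
    exact (Submodule.Quotient.mk_eq_zero _).1 hz.symm
  let b := Module.Free.chooseBasis R K
  have hcoord : ∀ (I : Ideal R) (v : K), v ∈ (I • ⊤ : Submodule R K) ↔ ∀ j, b.repr v j ∈ I := by
    intro I v
    constructor
    · intro hv j
      refine Submodule.smul_induction_on (p := fun w => b.repr w j ∈ I) hv ?_ ?_
      · intro r hr n _
        rw [map_smul, Finsupp.smul_apply, smul_eq_mul]
        exact I.mul_mem_right _ hr
      · intro a c ha hc
        rw [map_add, Finsupp.add_apply]
        exact add_mem ha hc
    · intro h
      rw [← b.sum_repr v]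
      exact sum_mem fun j _ => Submodule.smul_mem_smul (h j) trivial
  have hker : ∀ v : K, i v ∈ (IsLocalRing.maximalIdeal R • ⊤ : Submodule R F) →
      v ∈ (IsLocalRing.maximalIdeal R • ⊤ : Submodule R K) := by
    intro v hv
    rw [hcoord]
    intro j
    by_contra hj
    have hu : IsUnit (b.repr v j) := by simpa using hj
    have h1 : i (y • v) ∈ (Ideal.ofList rs • ⊤ : Submodule R F) := by
      rw [map_smul]
      refine Submodule.smul_induction_on (p := fun w => y • w ∈ (Ideal.ofList rs • ⊤ : Submodule R F)) hv ?_ ?_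
      · intro r hr n _
        rw [smul_smul, mul_comm]
        exact Submodule.smul_mem_smul (hy' r hr) trivial
      · intro a c ha hc
        rw [smul_add]
        exact add_mem ha hc
    have h2 := (hcoord _ _).1 (hinj _ h1) j
    rw [map_smul, Finsupp.smul_apply, smul_eq_mul] at h2
    exact hy ((Ideal.mul_unit_mem_iff_mem _ hu).1 h2)
  have hT : Function.Injective (i.lTensor (R ⧸ IsLocalRing.maximalIdeal R)) := by
    rw [injective_iff_map_eq_zero]
    intro x hx
    obtain ⟨v, rfl⟩ : ∃ v : K, (Ideal.Quotient.mk (IsLocalRing.maximalIdeal R) 1) ⊗ₜ[R] v = x := by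
      obtain ⟨v, hv⟩ := Submodule.Quotient.mk_surjective _ 
        (TensorProduct.quotTensorEquivQuotSMul K (IsLocalRing.maximalIdeal R) x)
      refine ⟨v, (TensorProduct.quotTensorEquivQuotSMul K (IsLocalRing.maximalIdeal R)).injective ?_⟩
      rw [← hv]
      erw [TensorProduct.quotTensorEquivQuotSMul_mk_tmul]
      rw [one_smul]
    rw [LinearMap.lTensor_tmul] at hx
    have hx2 := congrArg (TensorProduct.quotTensorEquivQuotSMul F (IsLocalRing.maximalIdeal R)) hx
    erw [TensorProduct.quotTensorEquivQuotSMul_mk_tmul, map_zero] at hx2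
    rw [one_smul, Submodule.Quotient.mk_eq_zero] at hx2
    apply (TensorProduct.quotTensorEquivQuotSMul K (IsLocalRing.maximalIdeal R)).injective
    erw [TensorProduct.quotTensorEquivQuotSMul_mk_tmul, map_zero]
    rw [one_smul, Submodule.Quotient.mk_eq_zero]
    exact hker v hx2
  obtain ⟨l, hl⟩ := (IsLocalRing.split_injective_iff_lTensor_residueField_injective i).2 hT
  obtain ⟨l', hl'⟩ := ((hip.split_tfae hi hp).out 0 1 rfl rfl).2 ⟨l, hl⟩
  exact Module.Projective.of_split l' p hl'

theorem projective_of_pd {R : Type u} [CommRing R] [IsLocalRing R] [IsNoetherianRing R]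
    (rs : List R) (hR : IsWeaklyRegular R rs)
    (y : R) (hy : y ∉ Ideal.ofList rs)
    (hy' : ∀ r ∈ IsLocalRing.maximalIdeal R, r * y ∈ Ideal.ofList rs) (n : ℕ) :
    ∀ (M : Type u) [AddCommGroup M] [Module R M] [Module.Finite R M],
      HasProjectiveDimensionLT (ModuleCat.of R M) (n + 1) → IsWeaklyRegular M rs →
      Module.Projective R M := by
  induction n with
  | zero =>
    intro M _ _ _ h _
    rw [zero_add, ← projective_iff_hasProjectiveDimensionLT_one] at h
    exact (IsProjective.iff_projective (R := R) M).2 h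
  | succ n ih =>
    intro M _ _ _ h hM
    obtain ⟨F, _, _, _, _, f, hf⟩ := Module.exists_finite_presentation R M
    have hS := LinearMap.shortExact_shortComplexKer hf
    have hex := LinearMap.exact_subtype_ker_map f
    have hK := ih (LinearMap.ker f)
      ((hS.hasProjectiveDimensionLT_X₃_iff n (inferInstanceAs (Projective (ModuleCat.of R F)))).1 h)
      (reg_ker_length rs _ f (Submodule.subtype_injective _) hex hf (weaklyRegular_free hR F) hM)
    have : Module.Free R (LinearMap.ker f) := Module.free_of_flat_of_isLocalRing
    exact split_of_socle rs y hy hy' _ f (Submodule.subtype_injective _) hex hf hM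

theorem pd_bound {R : Type u} [CommRing R] [IsLocalRing R] [IsNoetherianRing R]
    (rs : List R) (hR : IsWeaklyRegular R rs)
    (y : R) (hy : y ∉ Ideal.ofList rs)
    (hy' : ∀ r ∈ IsLocalRing.maximalIdeal R, r * y ∈ Ideal.ofList rs) (j : ℕ) :
    ∀ (s n : ℕ) (hs : s + j = rs.length) (M : Type u) [AddCommGroup M] [Module R M] [Module.Finite R M],
      HasProjectiveDimensionLT (ModuleCat.of R M) (n + 2) → IsWeaklyRegular M (rs.take s) →
      HasProjectiveDimensionLT (ModuleCat.of R M) (j + 1) := by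
  induction j with
  | zero =>
    intro s n hs M _ _ _ h hM
    rw [List.take_of_length_le (by omega)] at hM
    have := projective_of_pd rs hR y hy hy' (n + 1) M h hM
    rw [zero_add, ← projective_iff_hasProjectiveDimensionLT_one]
    exact (IsProjective.iff_projective (R := R) M).1 this
  | succ j ih =>
    intro s n hs M _ _ _ h hM
    obtain ⟨F, _, _, _, _, f, hf⟩ := Module.exists_finite_presentation R M
    have hS := LinearMap.shortExact_shortComplexKer hf
    have hex := LinearMap.exact_subtype_ker_map f
    have hF : IsWeaklyRegular F (rs.take (s + 1)) := by
      have := weaklyRegular_free hR F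
      rw [← List.take_append_drop (s + 1) rs, isWeaklyRegular_append_iff] at this
      exact this.1
    have hpr : Projective (ModuleCat.of R F) := inferInstance
    have h1 : HasProjectiveDimensionLT (ModuleCat.of R (LinearMap.ker f)) (n + 1) :=
      (hS.hasProjectiveDimensionLT_X₃_iff n hpr).1 h
    have hK := ih (s + 1) n (by omega) (LinearMap.ker f)
      (hasProjectiveDimensionLT_of_ge _ (n + 1) (n + 2) (by omega))
      (reg_ker rs s _ f (Submodule.subtype_injective _) hex hf hF hM)
    exact (hS.hasProjectiveDimensionLT_X₃_iff j hpr).2 hK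

theorem pd_of_projDimLE {R : Type u} [CommRing R] (n : ℕ) :
    ∀ (M : Type u) [AddCommGroup M] [Module R M], ProjDimLE R n M →
      HasProjectiveDimensionLT (ModuleCat.of R M) (n + 1) := by
  induction n with
  | zero =>
    intro M _ _ h
    rw [zero_add, ← projective_iff_hasProjectiveDimensionLT_one]
    exact (IsProjective.iff_projective (R := R) M).1 h.1
  | succ n ih =>
    intro M _ _ h
    obtain ⟨k, f, hf, h⟩ := h
    have hS := LinearMap.shortExact_shortComplexKer hf
    exact (hS.hasProjectiveDimensionLT_X₃_iff n
      (inferInstanceAs (Projective (ModuleCat.of R (Fin k → R))))).2 (ih _ h)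

theorem extMod_smul_eq_zero {R : Type u} [CommRing R] (n : ℕ) (M N : Type u)
    [AddCommGroup M] [Module R M] [AddCommGroup N] [Module R N]
    (P : ProjectiveResolution (ModuleCat.of R M)) (r : R)
    (h : ∀ f : P.complex.X (n + 1) ⟶ ModuleCat.of R N, P.complex.d (n + 2) (n + 1) ≫ f = 0 →
      ∃ g : P.complex.X n ⟶ ModuleCat.of R N, P.complex.d (n + 1) n ≫ g = r • f)
    (v : ExtMod R (n + 1) M N) : r • v = 0 := by
  let C := P.complex.linearYonedaObj R (ModuleCat.of R N)
  let e : ExtMod R (n + 1) M N ≅ C.homology (n + 1) := P.isoExt (n + 1) (ModuleCat.of R N)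
  have key : ∀ w : C.homology (n + 1), r • w = 0 := by
    intro w
    obtain ⟨z, rfl⟩ := (ModuleCat.epi_iff_surjective (C.homologyπ (n + 1))).1 inferInstance w
    have hz : C.d (n + 1) (n + 2) (C.iCycles (n + 1) z) = 0 := by
      rw [← ModuleCat.comp_apply, C.iCycles_d]; rfl
    obtain ⟨g, hg⟩ : ∃ g : C.X n, C.d n (n + 1) g = r • C.iCycles (n + 1) z :=
      h (C.iCycles (n + 1) z) hz
    have h2 : C.toCycles n (n + 1) g = r • z := by
      apply (ModuleCat.mono_iff_injective (C.iCycles (n + 1))).1 inferInstance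
      rw [← ModuleCat.comp_apply, C.toCycles_i, map_smul]
      exact hg
    rw [← map_smul, ← h2, ← ModuleCat.comp_apply, C.toCycles_comp_homologyπ]
    rfl
  have := key (e.hom v)
  rw [← map_smul] at this
  have h3 := congrArg e.inv this
  rw [map_zero, ← ModuleCat.comp_apply, e.hom_inv_id] at h3
  exact h3

theorem extMod_ann {R : Type u} [CommRing R] (n : ℕ) (M N : Type u)
    [AddCommGroup M] [Module R M] [AddCommGroup N] [Module R N] (r : R) (hr : ∀ m : M, r • m = 0)
    (v : ExtMod R (n + 1) M N) : r • v = 0 := by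
  refine extMod_smul_eq_zero n M N (projectiveResolution (ModuleCat.of R M)) r ?_ v
  intro f hf
  have hsf : (projectiveResolution (ModuleCat.of R M)).complex.d (n + 2) (n + 1) ≫ (f ≫ (r • 𝟙 (ModuleCat.of R N))) = 0 := by
    rw [← Category.assoc, hf, Limits.zero_comp]
  have h := ((projectiveResolution (ModuleCat.of R M)).extMk_eq_zero_iff (f ≫ (r • 𝟙 (ModuleCat.of R N)))
    (n + 2) rfl hsf n rfl).1 ?_
  · obtain ⟨g, hg⟩ := h
    exact ⟨g, by rw [hg]; simp⟩
  · rw [← ProjectiveResolution.extMk_comp_mk₀ _ f (n + 2) rfl hf]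
    rw [← Abelian.Ext.smul_eq_comp_mk₀]
    generalize (ProjectiveResolution.extMk _ f (n + 2) rfl hf) = x
    rw [← Abelian.Ext.mk₀_id_comp x, ← Abelian.Ext.smul_comp, ← Abelian.Ext.mk₀_smul]
    have : r • 𝟙 (ModuleCat.of R M) = 0 := by
      ext m
      exact hr m
    rw [this]
    simp

theorem extMod_zero {R : Type u} [CommRing R] (n : ℕ) (M N : Type u)
    [AddCommGroup M] [Module R M] [AddCommGroup N] [Module R N]
    (h : HasProjectiveDimensionLT (ModuleCat.of R M) (n + 1)) :
    Subsingleton (ExtMod R (n + 1) M N) := by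
  refine subsingleton_of_forall_eq 0 fun v => ?_
  rw [← one_smul R v]
  refine extMod_smul_eq_zero n M N (projectiveResolution (ModuleCat.of R M)) 1 ?_ v
  intro f hf
  rw [one_smul]
  exact ((projectiveResolution (ModuleCat.of R M)).extMk_eq_zero_iff f (n + 2) rfl hf n rfl).1
    (Abelian.Ext.eq_zero_of_hasProjectiveDimensionLT _ (n + 1) le_rfl)

open IsLocalRing in
theorem retract_residue {R : Type u} [CommRing R] [IsLocalRing R] (V : ModuleCat.{u} R)
    [Nontrivial V] (hV : ∀ r ∈ maximalIdeal R, ∀ v : V, r • v = 0) :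
    Nonempty (Retract (ModuleCat.of R (ResidueField R)) V) := by
  have ht : Module.IsTorsionBySet R V (maximalIdeal R : Set R) := fun v r => hV r.1 r.2 v
  letI : Module (R ⧸ maximalIdeal R) V := ht.module
  letI : Field (R ⧸ maximalIdeal R) := Ideal.Quotient.field _
  obtain ⟨v, hv⟩ := exists_ne (0 : V)
  let i : (R ⧸ maximalIdeal R) →ₗ[R ⧸ maximalIdeal R] V := LinearMap.toSpanSingleton _ _ v
  have hi : LinearMap.ker i = ⊥ := LinearMap.ker_toSpanSingleton _ hv
  obtain ⟨p, hp⟩ := i.exists_leftInverse_of_injective hi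
  have : IsScalarTower R (R ⧸ maximalIdeal R) V := ht.isScalarTower
  refine ⟨⟨ModuleCat.ofHom (i.restrictScalars R), ModuleCat.ofHom (p.restrictScalars R), ?_⟩⟩
  ext x
  exact LinearMap.congr_fun hp x

theorem residue_pd {R : Type u} [CommRing R] [IsNoetherianRing R]
    [IsLocalRing R] (d : ℕ) (hdim : ringKrullDim R = d) (n : ℕ)
    (h : HasProjectiveDimensionLT (ModuleCat.of R (IsLocalRing.ResidueField R)) n) :
    HasProjectiveDimensionLT (ModuleCat.of R (IsLocalRing.ResidueField R)) (d + 1) := by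
  obtain ⟨rs, hl, hR, y, hy, hy'⟩ := exists_max_reg R d hdim
  have : Module.Finite R (IsLocalRing.ResidueField R) :=
    inferInstanceAs (Module.Finite R (R ⧸ IsLocalRing.maximalIdeal R))
  have h1 := pd_bound rs hR y hy hy' rs.length 0 n (by omega) (IsLocalRing.ResidueField R)
    (hasProjectiveDimensionLT_of_ge _ n (n + 2) (by omega)) (by simp)
  exact hasProjectiveDimensionLT_of_ge _ (rs.length + 1) (d + 1) (by omega)

/-- Let `(R, 𝔪, k)` be a commutative noetherian Cohen–Macaulay local ring of Krull dimension
`d` (Cohen–Macaulayness is expressed by the vanishing `Ext_R^i(k, R) = 0` for all `i < d`,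
i.e. `depth R = d = dim R`).  Then `R` is Gorenstein, equivalently `Ext_R^{d+1}(k, R) = 0`,
if and only if the `R`-module `Ext_R^{d+1}(k, R)` has finite projective dimension. -/
theorem gorenstein_iff_ext_finiteProjDim (R : Type u) [CommRing R] [IsNoetherianRing R]
    [IsLocalRing R] (d : ℕ) (hdim : ringKrullDim R = d)
    (hCM : ∀ i < d, Subsingleton (ExtMod R i (IsLocalRing.ResidueField R) R)) :
    Subsingleton (ExtMod R (d + 1) (IsLocalRing.ResidueField R) R) ↔
      HasFiniteProjDim R (ExtMod R (d + 1) (IsLocalRing.ResidueField R) R) := by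
  constructor
  · intro h
    exact ⟨0, inferInstance, inferInstance⟩
  · rintro ⟨n, hn⟩
    by_contra hns
    have hnt : Nontrivial (ExtMod R (d + 1) (IsLocalRing.ResidueField R) R) :=
      not_subsingleton_iff_nontrivial.1 hns
    have hpd : HasProjectiveDimensionLT (ExtMod R (d + 1) (IsLocalRing.ResidueField R) R)
      (n + 1) := pd_of_projDimLE n _ hn
    obtain ⟨ρ⟩ := retract_residue (ExtMod R (d + 1) (IsLocalRing.ResidueField R) R)
      (fun r hr v => extMod_ann d _ _ r (fun m => by
        rw [Algebra.smul_def, IsLocalRing.ResidueField.algebraMap_eq,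
          (IsLocalRing.residue_eq_zero_iff r).2 hr, zero_mul]) v)
    have hk := ρ.hasProjectiveDimensionLT (n + 1)
    exact hns (extMod_zero d _ _ (residue_pd d hdim _ hk))
end

section
/- Let R be a commutative noetherian ring and let 0 → F → N →^f M → 0 be a short exact sequence of finitely generated R-modules with F finitely generated free, and suppose Ext_R^1(N, R) = 0. Choose finite free presentations P₁ →^{d} P₀ → M → 0 and Q₁ →^{e} Q₀ → N → 0, and set Tr M := coker(Hom_R(d, R) : P₀* → P₁*) and Tr N := coker(Hom_R(e, R) : Q₀* → Q₁*), where (−)* = Hom_R(−, R). Then there exist finitely generated free R-modules G and G′ and a short exact sequence 0 → Ext_R^1(M, R) → Tr M ⊕ G → Tr N ⊕ G′ → 0. -/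
open CategoryTheory

universe u

section TransposeAux

variable {R : Type u} [CommRing R]

/-- The transpose attached to a map `D`. -/
abbrev TrOf {X Q : Type*} [AddCommGroup X] [Module R X] [AddCommGroup Q] [Module R Q]
    (D : X →ₗ[R] Q) := Module.Dual R X ⧸ LinearMap.range D.dualMap

/-- The submodule of the transpose given by functionals vanishing on `ker D`. -/
def HOf {X Q : Type*} [AddCommGroup X] [Module R X] [AddCommGroup Q] [Module R Q]
    (D : X →ₗ[R] Q) : Submodule R (TrOf D) :=
  (LinearMap.ker D).dualAnnihilator.map (LinearMap.range D.dualMap).mkQ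

lemma mk_mem_HOf {X Q : Type*} [AddCommGroup X] [Module R X] [AddCommGroup Q] [Module R Q]
    (D : X →ₗ[R] Q) (φ : Module.Dual R X) :
    (LinearMap.range D.dualMap).mkQ φ ∈ HOf D ↔ ∀ x, D x = 0 → φ x = 0 := by
  constructor
  · rintro ⟨ψ, hψ, h⟩ x hx
    rw [← sub_eq_zero, ← map_sub, Submodule.mkQ_apply, Submodule.Quotient.mk_eq_zero] at h
    obtain ⟨a, ha⟩ := h
    have h1 := LinearMap.congr_fun ha x
    have h2 := (Submodule.mem_dualAnnihilator _).1 hψ x hx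
    simp [LinearMap.dualMap_apply, hx, h2] at h1
    exact h1
  · intro h
    exact ⟨φ, (Submodule.mem_dualAnnihilator _).2 fun x hx => h x hx, rfl⟩

lemma mk_eq_iff {X Q : Type*} [AddCommGroup X] [Module R X] [AddCommGroup Q] [Module R Q]
    (D : X →ₗ[R] Q) (φ ψ : Module.Dual R X) :
    (LinearMap.range D.dualMap).mkQ φ = (LinearMap.range D.dualMap).mkQ ψ ↔
      ∃ a : Module.Dual R Q, ∀ x, a (D x) = φ x - ψ x := by
  rw [← sub_eq_zero, ← map_sub, Submodule.mkQ_apply, Submodule.Quotient.mk_eq_zero]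
  constructor
  · rintro ⟨a, ha⟩
    exact ⟨a, fun x => LinearMap.congr_fun ha x⟩
  · rintro ⟨a, ha⟩
    exact ⟨a, LinearMap.ext fun x => ha x⟩

lemma mk_eq_zero' {X Q : Type*} [AddCommGroup X] [Module R X] [AddCommGroup Q] [Module R Q]
    (D : X →ₗ[R] Q) (φ : Module.Dual R X) :
    (LinearMap.range D.dualMap).mkQ φ = 0 ↔
      ∃ a : Module.Dual R Q, ∀ x, a (D x) = φ x := by
  have := mk_eq_iff D φ 0
  simpa using this

/-- The map on transposes induced by a commutative square. -/
noncomputable def TrMap {X Q X' Q' : Type*} [AddCommGroup X] [Module R X] [AddCommGroup Q]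
    [Module R Q] [AddCommGroup X'] [Module R X'] [AddCommGroup Q'] [Module R Q']
    (D : X →ₗ[R] Q) (D' : X' →ₗ[R] Q') (f1 : X →ₗ[R] X') (f0 : Q →ₗ[R] Q')
    (h : ∀ x, D' (f1 x) = f0 (D x)) : TrOf D' →ₗ[R] TrOf D :=
  Submodule.mapQ _ _ f1.dualMap (by
    rintro _ ⟨a, rfl⟩
    exact ⟨a ∘ₗ f0, LinearMap.ext fun x => by simp [LinearMap.dualMap_apply, h]⟩)

lemma TrMap_mk {X Q X' Q' : Type*} [AddCommGroup X] [Module R X] [AddCommGroup Q]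
    [Module R Q] [AddCommGroup X'] [Module R X'] [AddCommGroup Q'] [Module R Q']
    (D : X →ₗ[R] Q) (D' : X' →ₗ[R] Q') (f1 : X →ₗ[R] X') (f0 : Q →ₗ[R] Q')
    (h : ∀ x, D' (f1 x) = f0 (D x)) (φ : Module.Dual R X') :
    TrMap D D' f1 f0 h ((LinearMap.range D'.dualMap).mkQ φ) =
      (LinearMap.range D.dualMap).mkQ (φ ∘ₗ f1) := rfl

lemma TrMap_mem {X Q X' Q' : Type*} [AddCommGroup X] [Module R X] [AddCommGroup Q]
    [Module R Q] [AddCommGroup X'] [Module R X'] [AddCommGroup Q'] [Module R Q']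
    (D : X →ₗ[R] Q) (D' : X' →ₗ[R] Q') (f1 : X →ₗ[R] X') (f0 : Q →ₗ[R] Q')
    (h : ∀ x, D' (f1 x) = f0 (D x)) (t : TrOf D') (ht : t ∈ HOf D') :
    TrMap D D' f1 f0 h t ∈ HOf D := by
  obtain ⟨φ, rfl⟩ := Submodule.mkQ_surjective _ t
  rw [mk_mem_HOf] at ht
  rw [TrMap_mk, mk_mem_HOf]
  intro x hx
  exact ht _ (by rw [h, hx, map_zero])

/-- Lifting through a map whose range contains the image. -/
lemma exists_lift {P A B : Type*} [AddCommGroup P] [Module R P] [AddCommGroup A] [Module R A]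
    [AddCommGroup B] [Module R B] [Module.Projective R P] (g : A →ₗ[R] B) (h : P →ₗ[R] B)
    (H : ∀ x, h x ∈ LinearMap.range g) : ∃ k : P →ₗ[R] A, ∀ x, g (k x) = h x := by
  obtain ⟨k, hk⟩ := Module.projective_lifting_property g.rangeRestrict (h.codRestrict _ H)
    g.surjective_rangeRestrict
  refine ⟨k, fun x => ?_⟩
  have := congrArg Subtype.val (LinearMap.congr_fun hk x)
  simpa using this

lemma TrMap_comp_id {X Q M X' Q' : Type*} [AddCommGroup X] [Module R X] [AddCommGroup Q]
    [Module R Q] [AddCommGroup X'] [Module R X'] [AddCommGroup Q'] [Module R Q']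
    [AddCommGroup M] [Module R M] [Module.Projective R Q']
    (D : X →ₗ[R] Q) (D' : X' →ₗ[R] Q') (ε : Q →ₗ[R] M) (ε' : Q' →ₗ[R] M)
    (hD' : LinearMap.range D' = LinearMap.ker ε')
    (f1 : X →ₗ[R] X') (f0 : Q →ₗ[R] Q') (h : ∀ x, D' (f1 x) = f0 (D x))
    (hε : ∀ x, ε' (f0 x) = ε x)
    (g1 : X' →ₗ[R] X) (g0 : Q' →ₗ[R] Q) (h' : ∀ x, D (g1 x) = g0 (D' x))
    (hε' : ∀ x, ε (g0 x) = ε' x) (t : TrOf D') (ht : t ∈ HOf D') :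
    TrMap D' D g1 g0 h' (TrMap D D' f1 f0 h t) = t := by
  obtain ⟨φ, rfl⟩ := Submodule.mkQ_surjective _ t
  rw [mk_mem_HOf] at ht
  rw [TrMap_mk, TrMap_mk, mk_eq_iff]
  obtain ⟨k, hk⟩ := exists_lift D' (f0 ∘ₗ g0 - LinearMap.id) (by
    intro x
    rw [hD']
    simp [hε, hε'])
  refine ⟨φ ∘ₗ k, fun x => ?_⟩
  have := ht (f1 (g1 x) - x - k (D' x)) (by
    simp [hk, h, h'])
  simp only [map_sub] at this
  simp only [LinearMap.comp_apply]
  rw [sub_eq_zero] at this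
  exact this.symm

lemma HOf_equiv {X Q M X' Q' : Type*} [AddCommGroup X] [Module R X] [AddCommGroup Q]
    [Module R Q] [AddCommGroup X'] [Module R X'] [AddCommGroup Q'] [Module R Q']
    [AddCommGroup M] [Module R M] [Module.Projective R Q'] [Module.Projective R Q]
    [Module.Projective R X'] [Module.Projective R X]
    (D : X →ₗ[R] Q) (D' : X' →ₗ[R] Q') (ε : Q →ₗ[R] M) (ε' : Q' →ₗ[R] M)
    (hε : Function.Surjective ε) (hε' : Function.Surjective ε')
    (hD : LinearMap.range D = LinearMap.ker ε)
    (hD' : LinearMap.range D' = LinearMap.ker ε') :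
    Nonempty (HOf D ≃ₗ[R] HOf D') := by
  obtain ⟨f0, hf0⟩ := exists_lift ε' ε (fun x => hε' _)
  obtain ⟨g0, hg0⟩ := exists_lift ε ε' (fun x => hε _)
  have e : ∀ x, ε (D x) = 0 := fun x => by
    have : D x ∈ LinearMap.ker ε := hD ▸ ⟨x, rfl⟩
    exact this
  have e' : ∀ x, ε' (D' x) = 0 := fun x => by
    have : D' x ∈ LinearMap.ker ε' := hD' ▸ ⟨x, rfl⟩
    exact this
  obtain ⟨f1, hf1⟩ := exists_lift D' (f0 ∘ₗ D) (by
    intro x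
    rw [hD']
    simp [hf0, e])
  obtain ⟨g1, hg1⟩ := exists_lift D (g0 ∘ₗ D') (by
    intro x
    rw [hD]
    simp [hg0, e'])
  refine ⟨LinearEquiv.ofLinearMap
    ((TrMap D' D g1 g0 hg1).restrict (fun t ht => TrMap_mem _ _ _ _ _ t ht))
    ((TrMap D D' f1 f0 hf1).restrict (fun t ht => TrMap_mem _ _ _ _ _ t ht)) ?_ ?_⟩
  · ext ⟨t, ht⟩ : 2
    exact TrMap_comp_id D D' ε ε' hD' f1 f0 hf1 hf0 g1 g0 hg1 hg0 t ht
  · ext ⟨t, ht⟩ : 2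
    exact TrMap_comp_id D' D ε' ε hD g1 g0 hg1 hg0 f1 f0 hf1 hf0 t ht

/-- Stable equivalence. -/
def StabEq (R : Type u) [CommRing R] (A B : Type*) [AddCommGroup A] [Module R A]
    [AddCommGroup B] [Module R B] : Prop :=
  ∃ m n : ℕ, Nonempty ((A × (Fin m → R)) ≃ₗ[R] (B × (Fin n → R)))

lemma dual_equiv_fin (X : Type*) [AddCommGroup X] [Module R X] [Module.Free R X]
    [Module.Finite R X] : ∃ n : ℕ, Nonempty (Module.Dual R X ≃ₗ[R] (Fin n → R)) := by
  classical
  let b := Module.Free.chooseBasis R X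
  exact ⟨_, ⟨(b.reindex (Fintype.equivFin _)).dualBasis.equivFun⟩⟩

/-- A surjection with the correct kernel computes the transpose. -/
lemma TrOf_equiv {X Q B : Type*} [AddCommGroup X] [Module R X] [AddCommGroup Q] [Module R Q]
    [AddCommGroup B] [Module R B] (D : X →ₗ[R] Q) (g : Module.Dual R X →ₗ[R] B)
    (hg : Function.Surjective g)
    (hk : ∀ φ, g φ = 0 ↔ ∃ a : Module.Dual R Q, ∀ x, a (D x) = φ x) :
    Nonempty (TrOf D ≃ₗ[R] B) := by
  refine ⟨(Submodule.quotEquivOfEq _ _ ?_).trans (g.quotKerEquivOfSurjective hg)⟩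
  ext φ
  rw [LinearMap.mem_ker, hk]
  constructor
  · rintro ⟨a, ha⟩
    exact ⟨a, fun x => LinearMap.congr_fun ha x⟩
  · rintro ⟨a, ha⟩
    exact ⟨a, LinearMap.ext fun x => ha x⟩

lemma TrOf_coprod_left {X X' Q : Type*} [AddCommGroup X] [Module R X] [AddCommGroup Q]
    [Module R Q] [AddCommGroup X'] [Module R X'] (D : X →ₗ[R] Q) (D' : X' →ₗ[R] Q)
    (k : X' →ₗ[R] X) (hk : ∀ x, D (k x) = D' x) :
    Nonempty (TrOf (D.coprod D') ≃ₗ[R] (TrOf D × Module.Dual R X')) := by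
  refine TrOf_equiv _
    (((LinearMap.range D.dualMap).mkQ ∘ₗ (LinearMap.inl R X X').dualMap).prod
      ((LinearMap.inr R X X').dualMap - k.dualMap ∘ₗ (LinearMap.inl R X X').dualMap)) ?_ ?_
  · rintro ⟨t, ψ⟩
    obtain ⟨φ, rfl⟩ := Submodule.mkQ_surjective _ t
    refine ⟨φ.coprod (ψ + φ ∘ₗ k), Prod.ext ?_ ?_⟩
    · exact congrArg (LinearMap.range D.dualMap).mkQ (LinearMap.ext fun x => by
        simp [LinearMap.dualMap_apply])
    · exact LinearMap.ext fun x => by simp [LinearMap.dualMap_apply]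
  · intro φ
    have h0 : ∀ x y, φ (x, y) = φ (x, 0) + φ (0, y) := fun x y => by rw [← map_add]; simp
    rw [LinearMap.prod_apply, Function.prod_apply, Prod.mk_eq_zero, LinearMap.comp_apply, mk_eq_zero']
    constructor
    · rintro ⟨⟨a, ha⟩, h⟩
      refine ⟨a, fun ⟨x, y⟩ => ?_⟩
      have h1 := ha x
      have h2 := ha (k y)
      have h3 := LinearMap.congr_fun h y
      simp [LinearMap.dualMap_apply, sub_eq_zero] at h1 h2 h3
      rw [h0, h3, ← h1, ← h2, hk]
      simp
    · rintro ⟨a, ha⟩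
      refine ⟨⟨a, fun x => ?_⟩, LinearMap.ext fun y => ?_⟩
      · simpa [LinearMap.dualMap_apply] using ha (x, 0)
      · have h1 := ha (k y, 0)
        have h2 := ha (0, y)
        simp [hk] at h1 h2
        simp [LinearMap.dualMap_apply, ← h1, ← h2]

lemma TrOf_swap {X X' Q : Type*} [AddCommGroup X] [Module R X] [AddCommGroup Q]
    [Module R Q] [AddCommGroup X'] [Module R X'] (D : X →ₗ[R] Q) (D' : X' →ₗ[R] Q) :
    Nonempty (TrOf (D.coprod D') ≃ₗ[R] TrOf (D'.coprod D)) := by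
  refine TrOf_equiv _ ((LinearMap.range (D'.coprod D).dualMap).mkQ ∘ₗ
    (LinearEquiv.prodComm R X' X).toLinearMap.dualMap) ?_ ?_
  · intro t
    obtain ⟨φ, rfl⟩ := Submodule.mkQ_surjective _ t
    exact ⟨φ ∘ₗ (LinearEquiv.prodComm R X X').toLinearMap, rfl⟩
  · intro φ
    rw [LinearMap.comp_apply, mk_eq_zero']
    constructor
    · rintro ⟨a, ha⟩
      exact ⟨a, fun ⟨x, y⟩ => by
        simpa [LinearMap.dualMap_apply, add_comm] using ha (y, x)⟩
    · rintro ⟨a, ha⟩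
      exact ⟨a, fun ⟨x, y⟩ => by
        simpa [LinearMap.dualMap_apply, add_comm] using ha (y, x)⟩

/-- Two free covers of the same submodule have stably equivalent transposes. -/
lemma stabEq_of_range_eq {X X' Q : Type*} [AddCommGroup X] [Module R X] [AddCommGroup Q]
    [Module R Q] [AddCommGroup X'] [Module R X'] [Module.Free R X] [Module.Finite R X]
    [Module.Free R X'] [Module.Finite R X'] (D : X →ₗ[R] Q) (D' : X' →ₗ[R] Q)
    (h : LinearMap.range D = LinearMap.range D') : StabEq R (TrOf D) (TrOf D') := by
  obtain ⟨k, hk⟩ := exists_lift D D' (fun x => h ▸ ⟨x, rfl⟩)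
  obtain ⟨k', hk'⟩ := exists_lift D' D (fun x => h ▸ ⟨x, rfl⟩)
  obtain ⟨e1⟩ := TrOf_coprod_left D D' k hk
  obtain ⟨e2⟩ := TrOf_coprod_left D' D k' hk'
  obtain ⟨e3⟩ := TrOf_swap D D'
  obtain ⟨m, ⟨em⟩⟩ := dual_equiv_fin (R := R) X'
  obtain ⟨n, ⟨en⟩⟩ := dual_equiv_fin (R := R) X
  exact ⟨m, n, ⟨((LinearEquiv.refl R _).prodCongr em).symm.trans
    (e1.symm.trans (e3.trans (e2.trans ((LinearEquiv.refl R _).prodCongr en))))⟩⟩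

/-- Enlarging the presentation by a trivial summand does not change the transpose. -/
lemma TrOf_enlarge {X P P' : Type*} [AddCommGroup X] [Module R X] [AddCommGroup P]
    [Module R P] [AddCommGroup P'] [Module R P'] (D : X →ₗ[R] P) (h : P' →ₗ[R] P) :
    Nonempty (TrOf ((D.prod (0 : X →ₗ[R] P')).coprod ((-h).prod LinearMap.id))
      ≃ₗ[R] TrOf D) := by
  refine TrOf_equiv _ ((LinearMap.range D.dualMap).mkQ ∘ₗ (LinearMap.inl R X P').dualMap) ?_ ?_
  · intro t
    obtain ⟨φ, rfl⟩ := Submodule.mkQ_surjective _ t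
    exact ⟨φ ∘ₗ LinearMap.fst R X P', rfl⟩
  · intro φ
    have h0 : ∀ x y, φ (x, y) = φ (x, 0) + φ (0, y) := fun x y => by rw [← map_add]; simp
    rw [LinearMap.comp_apply, mk_eq_zero']
    constructor
    · rintro ⟨a, ha⟩
      refine ⟨a.coprod (φ ∘ₗ LinearMap.inr R X P' + a ∘ₗ h), fun ⟨x, y⟩ => ?_⟩
      have h1 := ha x
      simp [LinearMap.dualMap_apply] at h1
      rw [h0, ← h1]
      simp
      abel
    · rintro ⟨a, ha⟩
      refine ⟨a ∘ₗ LinearMap.inl R P P', fun x => ?_⟩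
      simpa [LinearMap.dualMap_apply] using ha (x, 0)

lemma range_enlarge {X P P' M : Type*} [AddCommGroup X] [Module R X] [AddCommGroup P]
    [Module R P] [AddCommGroup P'] [Module R P'] [AddCommGroup M] [Module R M]
    (D : X →ₗ[R] P) (ε : P →ₗ[R] M) (ε' : P' →ₗ[R] M) (h : P' →ₗ[R] P)
    (hD : LinearMap.range D = LinearMap.ker ε) (hh : ∀ x, ε (h x) = ε' x) (z : P × P') :
    z ∈ LinearMap.range ((D.prod (0 : X →ₗ[R] P')).coprod ((-h).prod LinearMap.id)) ↔
      ε z.1 + ε' z.2 = 0 := by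
  obtain ⟨p, p'⟩ := z
  constructor
  · rintro ⟨⟨x, y⟩, hxy⟩
    have e : ε (D x) = 0 := by
      have : D x ∈ LinearMap.ker ε := hD ▸ ⟨x, rfl⟩
      exact this
    simp at hxy
    obtain ⟨rfl, rfl⟩ := hxy
    simp [e, hh]
  · intro H
    have : p + h p' ∈ LinearMap.range D := by
      rw [hD]
      simpa [hh] using H
    obtain ⟨x, hx⟩ := this
    exact ⟨(x, p'), by simp [hx]⟩

/-- Transposes of two presentations of the same module are stably equivalent. -/
lemma stabEq_of_presentations {X P X' P' M : Type*} [AddCommGroup X] [Module R X]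
    [AddCommGroup P] [Module R P] [AddCommGroup X'] [Module R X']
    [AddCommGroup P'] [Module R P'] [AddCommGroup M] [Module R M]
    [Module.Free R X] [Module.Finite R X] [Module.Free R X'] [Module.Finite R X']
    [Module.Free R P] [Module.Finite R P] [Module.Free R P'] [Module.Finite R P']
    (D : X →ₗ[R] P) (D' : X' →ₗ[R] P') (ε : P →ₗ[R] M) (ε' : P' →ₗ[R] M)
    (hε : Function.Surjective ε) (hε' : Function.Surjective ε')
    (hD : LinearMap.range D = LinearMap.ker ε)
    (hD' : LinearMap.range D' = LinearMap.ker ε') :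
    StabEq R (TrOf D) (TrOf D') := by
  obtain ⟨f, hf⟩ := exists_lift ε' ε (fun x => hε' _)
  obtain ⟨g, hg⟩ := exists_lift ε ε' (fun x => hε _)
  obtain ⟨e1⟩ := TrOf_enlarge D g
  obtain ⟨e2⟩ := TrOf_enlarge D' f
  let E := (D.prod (0 : X →ₗ[R] P')).coprod ((-g).prod LinearMap.id)
  let E' := (D'.prod (0 : X' →ₗ[R] P)).coprod ((-f).prod LinearMap.id)
  let σ := LinearEquiv.prodComm R P' P
  have hE' : Nonempty (TrOf (σ.toLinearMap ∘ₗ E') ≃ₗ[R] TrOf E') := by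
    refine TrOf_equiv _ (LinearMap.range E'.dualMap).mkQ (Submodule.mkQ_surjective _) ?_
    intro φ
    rw [mk_eq_zero']
    constructor
    · rintro ⟨a, ha⟩
      exact ⟨a ∘ₗ σ.symm.toLinearMap, fun x => by simpa using ha x⟩
    · rintro ⟨a, ha⟩
      exact ⟨a ∘ₗ σ.toLinearMap, fun x => by simpa using ha x⟩
  obtain ⟨e3⟩ := hE'
  have hr : LinearMap.range E = LinearMap.range (σ.toLinearMap ∘ₗ E') := by
    ext z
    have h1 := range_enlarge D ε ε' g hD hg z
    have h2 := range_enlarge D' ε' ε f hD' hf (σ.symm z)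
    refine h1.trans ?_
    have h3 : z ∈ LinearMap.range (σ.toLinearMap ∘ₗ E') ↔ σ.symm z ∈ LinearMap.range E' := by
      constructor
      · rintro ⟨x, rfl⟩
        exact ⟨x, by simp⟩
      · rintro ⟨x, hx⟩
        exact ⟨x, by simp [hx]⟩
    rw [h3]
    refine Iff.trans ?_ h2.symm
    obtain ⟨p, p'⟩ := z
    simp [σ, add_comm]
  obtain ⟨m, n, ⟨e⟩⟩ := stabEq_of_range_eq _ _ hr
  exact ⟨m, n, ⟨(e1.symm.prodCongr (LinearEquiv.refl R _)).trans
    (e.trans ((e3.trans e2).prodCongr (LinearEquiv.refl R _)))⟩⟩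

/-- Computation of `Ext¹` from some projective presentation. -/
lemma ext_equiv_aux (M : Type u) [AddCommGroup M] [Module R M] :
    ∃ (X Q : ModuleCat.{u} R) (_ : Module.Projective R X) (_ : Module.Projective R Q)
      (D : X →ₗ[R] Q) (ε : Q →ₗ[R] M), Function.Surjective ε ∧
      LinearMap.range D = LinearMap.ker ε ∧ Nonempty (ExtMod R 1 M R ≃ₗ[R] HOf D) := by
  let P := projectiveResolution (ModuleCat.of R M)
  let K := P.complex.linearYonedaObj R (ModuleCat.of R R)
  let S := K.sc' 0 1 2
  let e : ExtMod R 1 M R ≅ S.moduleCatLeftHomologyData.H :=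
    P.isoExt (R := R) 1 (ModuleCat.of R R) ≪≫
      ShortComplex.homologyMapIso (K.isoSc' 0 1 2 (by simp) (by simp)) ≪≫ S.moduleCatHomologyIso
  have hX : ∀ n, Module.Projective R (P.complex.X n) := fun n =>
    (IsProjective.iff_projective (P.complex.X n)).2 (P.projective n)
  have hex1 := (P.exact_succ 0).moduleCat_range_eq_ker
  have hex0 := P.exact₀.moduleCat_range_eq_ker
  have hsurj : Function.Surjective (P.π.f 0).hom :=
    (ModuleCat.epi_iff_surjective _).1 inferInstance
  refine ⟨P.complex.X 1, P.complex.X 0, hX 1, hX 0, (P.complex.d 1 0).hom,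
    (P.π.f 0).hom, hsurj, hex0, ?_⟩
  let D := (P.complex.d 1 0).hom
  let θ : LinearMap.ker S.g.hom →ₗ[R] TrOf D :=
    (LinearMap.range D.dualMap).mkQ ∘ₗ
      (ModuleCat.homLinearEquiv (S := R) (M := P.complex.X 1) (N := ModuleCat.of R R)).toLinearMap
      ∘ₗ (LinearMap.ker S.g.hom).subtype
  have hSf : ∀ a : P.complex.X 0 ⟶ ModuleCat.of R R,
      S.f.hom a = (P.complex.d 1 0 ≫ a : P.complex.X 1 ⟶ ModuleCat.of R R) := fun a => rfl
  have hSg : ∀ a : P.complex.X 1 ⟶ ModuleCat.of R R,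
      S.g.hom a = (P.complex.d 2 1 ≫ a : P.complex.X 2 ⟶ ModuleCat.of R R) := fun a => rfl
  have hθ : ∀ (φ : P.complex.X 1 ⟶ ModuleCat.of R R) (hφ : φ ∈ LinearMap.ker S.g.hom),
      θ ⟨φ, hφ⟩ = (LinearMap.range D.dualMap).mkQ φ.hom := fun φ hφ => rfl
  have hker : LinearMap.range S.moduleCatToCycles = LinearMap.ker θ := by
    ext ⟨φ, hφ⟩
    constructor
    · rintro ⟨a, ha⟩
      have h1 : S.f.hom a = φ := congrArg Subtype.val ha
      change P.complex.X 0 ⟶ ModuleCat.of R R at a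
      rw [hSf] at h1
      subst h1
      exact (mk_eq_zero' D _).2 ⟨a.hom, fun x => rfl⟩
    · intro h
      obtain ⟨a, ha⟩ := (mk_eq_zero' D _).1 h
      refine ⟨(ModuleCat.ofHom a : P.complex.X 0 ⟶ ModuleCat.of R R), Subtype.ext ?_⟩
      refine (hSf (ModuleCat.ofHom a)).trans ?_
      exact ModuleCat.hom_ext (LinearMap.ext fun x => ha x)
  have hrange : LinearMap.range θ = HOf D := by
    ext t
    constructor
    · rintro ⟨⟨φ, hφ⟩, rfl⟩
      refine (mk_mem_HOf D _).2 fun x hx => ?_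
      change P.complex.X 1 ⟶ ModuleCat.of R R at φ
      have h1 : (P.complex.d 2 1 ≫ φ : P.complex.X 2 ⟶ ModuleCat.of R R) = 0 := hφ
      have h2 : x ∈ LinearMap.range (P.complex.d 2 1).hom := hex1.symm.le hx
      obtain ⟨y, rfl⟩ := h2
      exact congrArg (fun g : P.complex.X 2 ⟶ ModuleCat.of R R => g.hom y) h1
    · intro ht
      obtain ⟨φ, rfl⟩ := Submodule.mkQ_surjective _ t
      rw [mk_mem_HOf] at ht
      refine ⟨⟨(ModuleCat.ofHom φ : P.complex.X 1 ⟶ ModuleCat.of R R), ?_⟩, rfl⟩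
      refine (hSg (ModuleCat.ofHom φ)).trans ?_
      refine ModuleCat.hom_ext (LinearMap.ext fun y => ht _ ?_)
      exact hex1.le ⟨y, rfl⟩
  exact ⟨e.toLinearEquiv.trans ((Submodule.quotEquivOfEq _ _ hker).trans
    (θ.quotKerEquivRange.trans (LinearEquiv.ofEq _ _ hrange)))⟩

/-- `Ext¹` computed from an arbitrary projective presentation. -/
lemma ext_equiv (M : Type u) [AddCommGroup M] [Module R M] {X Q : Type*} [AddCommGroup X]
    [Module R X] [AddCommGroup Q] [Module R Q] [Module.Projective R X] [Module.Projective R Q]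
    (D : X →ₗ[R] Q) (ε : Q →ₗ[R] M) (hε : Function.Surjective ε)
    (hD : LinearMap.range D = LinearMap.ker ε) :
    Nonempty (ExtMod R 1 M R ≃ₗ[R] HOf D) := by
  obtain ⟨X', Q', _, _, D', ε', hε', hD', ⟨e⟩⟩ := ext_equiv_aux (R := R) M
  obtain ⟨e'⟩ := HOf_equiv D' D ε' ε hε' hε hD' hD
  exact ⟨e.trans e'⟩

end TransposeAux

/-- Let `R` be a commutative noetherian ring and `0 → F → N → M → 0` a short exact sequence of
finitely generated `R`-modules with `F` finitely generated free, and suppose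
`Ext_R^1(N, R) = 0`.  Given finite free presentations `P₁ → P₀ → M → 0` and
`Q₁ → Q₀ → N → 0`, with transposes `Tr M = coker(P₀* → P₁*)` and `Tr N = coker(Q₀* → Q₁*)`,
there exist finitely generated free modules `G`, `G'` and a short exact sequence
`0 → Ext_R^1(M, R) → Tr M ⊕ G → Tr N ⊕ G' → 0`. -/
theorem transpose_short_exact_sequence (R : Type u) [CommRing R] [IsNoetherianRing R]
    (M N : Type u) [AddCommGroup M] [Module R M] [AddCommGroup N] [Module R N]
    [Module.Finite R M] [Module.Finite R N]
    -- the short exact sequence `0 → F → N → M → 0` with `F = R^r` finitely generated free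
    (r : ℕ) (ι : (Fin r → R) →ₗ[R] N) (f : N →ₗ[R] M)
    (hι : Function.Injective ι) (hf : Function.Surjective f)
    (hexact : LinearMap.range ι = LinearMap.ker f)
    -- the vanishing `Ext_R^1(N, R) = 0`
    (hN : Subsingleton (ExtMod R 1 N R))
    -- a finite free presentation `P₁ → P₀ → M → 0` of `M`
    (p₀ p₁ : ℕ) (dM : (Fin p₁ → R) →ₗ[R] (Fin p₀ → R)) (εM : (Fin p₀ → R) →ₗ[R] M)
    (hεM : Function.Surjective εM) (hdM : LinearMap.range dM = LinearMap.ker εM)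
    -- a finite free presentation `Q₁ → Q₀ → N → 0` of `N`
    (q₀ q₁ : ℕ) (dN : (Fin q₁ → R) →ₗ[R] (Fin q₀ → R)) (εN : (Fin q₀ → R) →ₗ[R] N)
    (hεN : Function.Surjective εN) (hdN : LinearMap.range dN = LinearMap.ker εN) :
    ∃ (g g' : ℕ)
      (α : ExtMod R 1 M R →ₗ[R]
        ((Module.Dual R (Fin p₁ → R) ⧸ LinearMap.range dM.dualMap) × (Fin g → R)))
      (β : ((Module.Dual R (Fin p₁ → R) ⧸ LinearMap.range dM.dualMap) × (Fin g → R)) →ₗ[R]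
        ((Module.Dual R (Fin q₁ → R) ⧸ LinearMap.range dN.dualMap) × (Fin g' → R))),
      Function.Injective α ∧ Function.Surjective β ∧ LinearMap.range α = LinearMap.ker β := by
  have hker : ∀ x, f x = 0 ↔ ∃ y, ι y = x := fun x => by
    have : x ∈ LinearMap.range ι ↔ x ∈ LinearMap.ker f := by rw [hexact]
    exact this.symm
  have hkerN : ∀ x, εN x = 0 ↔ ∃ y, dN y = x := fun x => by
    have : x ∈ LinearMap.range dN ↔ x ∈ LinearMap.ker εN := by rw [hdN]
    exact this.symm
  obtain ⟨s, hs⟩ := exists_lift εN ι (fun x => hεN _)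
  let D := dN.coprod s
  have hDa : ∀ x y, D (x, y) = dN x + s y := fun x y => rfl
  have hε : Function.Surjective (f ∘ₗ εN) := hf.comp hεN
  have hD : LinearMap.range D = LinearMap.ker (f ∘ₗ εN) := by
    ext z
    rw [LinearMap.mem_ker, LinearMap.comp_apply, hker]
    constructor
    · rintro ⟨⟨x, y⟩, rfl⟩
      refine ⟨y, ?_⟩
      rw [hDa, map_add, hs, (hkerN (dN x)).2 ⟨x, rfl⟩, zero_add]
    · rintro ⟨y, hy⟩
      obtain ⟨x, hx⟩ := (hkerN (z - s y)).1 (by rw [map_sub, hs, hy, sub_self])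
      exact ⟨(x, y), by rw [hDa, hx, sub_add_cancel]⟩
  obtain ⟨eM⟩ := ext_equiv M D (f ∘ₗ εN) hε hD
  obtain ⟨eN⟩ := ext_equiv N dN εN hεN hdN
  have hext : ∀ φ : Module.Dual R (Fin q₁ → R), (∀ x, dN x = 0 → φ x = 0) →
      ∃ a : Module.Dual R (Fin q₀ → R), ∀ x, a (dN x) = φ x := by
    intro φ hφ
    have hsub : Subsingleton (HOf dN) := eN.symm.toEquiv.subsingleton
    have h1 := (mk_mem_HOf dN φ).2 hφ
    have h2 := congrArg Subtype.val (Subsingleton.elim (⟨_, h1⟩ : HOf dN) 0)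
    exact (mk_eq_zero' dN φ).1 h2
  let β0 : TrOf D →ₗ[R] TrOf dN :=
    TrMap dN D (LinearMap.inl R _ _) LinearMap.id (fun x => by simp [D])
  have hβ0 : Function.Surjective β0 := by
    intro t
    obtain ⟨φ, rfl⟩ := Submodule.mkQ_surjective _ t
    exact ⟨(LinearMap.range D.dualMap).mkQ (φ ∘ₗ LinearMap.fst R _ _), rfl⟩
  have hβk : ∀ t, β0 t = 0 ↔ t ∈ HOf D := by
    intro t
    obtain ⟨φ, rfl⟩ := Submodule.mkQ_surjective _ t
    rw [TrMap_mk, mk_eq_zero', mk_mem_HOf]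
    constructor
    · rintro ⟨a, ha⟩ ⟨x, y⟩ hxy
      have hy : y = 0 := by
        apply hι
        have := congrArg εN hxy
        rw [hDa, map_add, (hkerN (dN x)).2 ⟨x, rfl⟩, hs, zero_add, map_zero] at this
        rw [this, map_zero]
      subst hy
      rw [hDa, map_zero, add_zero] at hxy
      have := ha x
      rw [hxy, map_zero] at this
      exact this.symm
    · intro h
      refine hext _ fun x hx => ?_
      exact h (x, 0) (by rw [hDa, hx, map_zero, add_zero])
  obtain ⟨m, n, ⟨e⟩⟩ := stabEq_of_presentations dM D εM (f ∘ₗ εN) hεM hε hdM hD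
  refine ⟨m, n, e.symm.toLinearMap ∘ₗ LinearMap.inl R _ _ ∘ₗ (HOf D).subtype ∘ₗ eM.toLinearMap,
    (β0.prodMap LinearMap.id) ∘ₗ e.toLinearMap, ?_, ?_, ?_⟩
  · exact e.symm.injective.comp (LinearMap.inl_injective.comp
      (Subtype.val_injective.comp eM.injective))
  · exact (Function.Surjective.prodMap hβ0 Function.surjective_id).comp e.surjective
  · ext z
    constructor
    · rintro ⟨x, rfl⟩
      have := (hβk _).2 (eM x).2
      simp [this]
    · intro hz
      have hz' : (β0.prodMap LinearMap.id) (e z) = 0 := hz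
      rw [LinearMap.prodMap_apply, Prod.mk_eq_zero, hβk] at hz'
      refine ⟨eM.symm ⟨_, hz'.1⟩, ?_⟩
      apply e.injective
      have h2 : (e z).2 = 0 := hz'.2
      simp
      exact Prod.ext rfl h2.symm
end

section
/- Let (R, 𝔪, k) be a commutative noetherian Cohen–Macaulay local ring of Krull dimension d. If for every finitely generated R-module M the R-module Ext_R^1(M, R) has finite projective dimension, then Ext_R^{d+1}(k, R) = 0, i.e., R is Gorenstein. -/
open CategoryTheory

universe u

section Helpers

open IsLocalRing

variable {R : Type u} [CommRing R]

/-- Multiplication by `a` as a map `R/J → R/I`. -/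
def colonF (I J : Ideal R) (a : R) (hJ : ∀ r, r ∈ J ↔ a * r ∈ I) : (R ⧸ J) →ₗ[R] (R ⧸ I) :=
  Submodule.mapQ J I (LinearMap.mulLeft R a) (fun r hr => by simpa using (hJ r).1 hr)

/-- The projection `R/I → R/(I + a)`. -/
def colonG (I : Ideal R) (a : R) : (R ⧸ I) →ₗ[R] (R ⧸ (I ⊔ Ideal.span {a})) :=
  Submodule.mapQ I _ LinearMap.id (fun _ hr => Ideal.mem_sup_left hr)

/-- Quotient short complex `R/J → R/I → R/(I + a)`. -/
noncomputable abbrev colonSC (I J : Ideal R) (a : R) (hJ : ∀ r, r ∈ J ↔ a * r ∈ I) :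
    ShortComplex (ModuleCat.{u} R) :=
  ShortComplex.mk
    (X₁ := ModuleCat.of R (R ⧸ J)) (X₂ := ModuleCat.of R (R ⧸ I))
    (X₃ := ModuleCat.of R (R ⧸ (I ⊔ Ideal.span {a})))
    (ModuleCat.ofHom (colonF I J a hJ)) (ModuleCat.ofHom (colonG I a))
    (by
      rw [← ModuleCat.ofHom_comp]
      have : colonG I a ∘ₗ colonF I J a hJ = 0 := by
        refine LinearMap.ext fun x => ?_
        obtain ⟨x, rfl⟩ := Submodule.Quotient.mk_surjective _ x
        change (Submodule.Quotient.mk (a * x) : R ⧸ (I ⊔ Ideal.span {a})) = 0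
        rw [Submodule.Quotient.mk_eq_zero]
        exact Ideal.mem_sup_right (Ideal.mem_span_singleton.2 ⟨x, rfl⟩)
      rw [this]
      rfl)

lemma colonSC_shortExact (I J : Ideal R) (a : R) (hJ : ∀ r, r ∈ J ↔ a * r ∈ I) :
    (colonSC I J a hJ).ShortExact where
  exact := by
    rw [ShortComplex.moduleCat_exact_iff]
    intro x hx
    change R ⧸ I at x
    change colonG I a x = 0 at hx
    change ∃ y : R ⧸ J, colonF I J a hJ y = x
    obtain ⟨x, rfl⟩ := Submodule.Quotient.mk_surjective _ x
    change (Submodule.Quotient.mk x : R ⧸ (I ⊔ Ideal.span {a})) = 0 at hx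
    rw [Submodule.Quotient.mk_eq_zero, Submodule.mem_sup] at hx
    obtain ⟨y, hy, z, hz, rfl⟩ := hx
    obtain ⟨b, rfl⟩ := Ideal.mem_span_singleton.1 hz
    refine ⟨(Submodule.Quotient.mk b : R ⧸ J), ?_⟩
    change (Submodule.Quotient.mk (a * b) : R ⧸ I) = Submodule.Quotient.mk (y + a * b)
    rw [Submodule.Quotient.eq]
    simpa using hy
  mono_f := by
    rw [ModuleCat.mono_iff_injective]
    change Function.Injective (colonF I J a hJ)
    rw [injective_iff_map_eq_zero]
    intro x hx
    obtain ⟨x, rfl⟩ := Submodule.Quotient.mk_surjective _ x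
    change (Submodule.Quotient.mk (a * x) : R ⧸ I) = 0 at hx
    rw [Submodule.Quotient.mk_eq_zero] at hx ⊢
    exact (hJ x).2 hx
  epi_g := by
    rw [ModuleCat.epi_iff_surjective]
    change Function.Surjective (colonG I a)
    intro x
    obtain ⟨x, rfl⟩ := Submodule.Quotient.mk_surjective _ x
    exact ⟨Submodule.Quotient.mk x, rfl⟩

lemma colonF_self (I : Ideal R) (a : R) (hJ : ∀ r, r ∈ I ↔ a * r ∈ I) :
    ModuleCat.ofHom (colonF I I a hJ) = a • 𝟙 (ModuleCat.of R (R ⧸ I)) := by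
  have : colonF I I a hJ = a • LinearMap.id := by
    refine LinearMap.ext fun x => ?_
    obtain ⟨x, rfl⟩ := Submodule.Quotient.mk_surjective _ x
    rfl
  rw [this]
  rfl

/-- Vanishing of all high `Ext(k, N)` implies vanishing of all high `Ext(R/I, N)`. -/
lemma subsingleton_ext_quotient [IsNoetherianRing R] [IsLocalRing R] (N : ModuleCat.{u} R)
    [Module.Finite R N] (p : ℕ)
    (hk : ∀ i, p < i → Subsingleton (Abelian.Ext (ModuleCat.of R (R ⧸ maximalIdeal R)) N i))
    (I : Ideal R) :
    ∀ i, p < i → Subsingleton (Abelian.Ext (ModuleCat.of R (R ⧸ I)) N i) := by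
  induction I using IsNoetherian.induction with
  | hgt I ih =>
  intro i hi
  by_cases hI : I = ⊤
  · have hz : Limits.IsZero (ModuleCat.of R (R ⧸ I)) := by
      rw [ModuleCat.isZero_iff_subsingleton]
      exact Ideal.Quotient.subsingleton_iff.2 hI
    have := hz.hasProjectiveDimensionLT_zero
    exact HasProjectiveDimensionLT.subsingleton _ 0 i (by omega) N
  by_cases hm : I = maximalIdeal R
  · subst hm; exact hk i hi
  have key : ∀ a, a ∉ I → I < I ⊔ Ideal.span {a} := by
    intro a ha
    refine lt_of_le_of_ne le_sup_left fun h => ha ?_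
    rw [h]
    exact Ideal.mem_sup_right (Ideal.mem_span_singleton_self a)
  by_cases hp : ∃ a b, a ∉ I ∧ b ∉ I ∧ a * b ∈ I
  · obtain ⟨a, b, ha, hb, hab⟩ := hp
    let J : Ideal R := Submodule.comap (LinearMap.mulLeft R a) I
    have hJ : ∀ r, r ∈ J ↔ a * r ∈ I := fun r => Iff.rfl
    have hIJ : I < J := by
      refine lt_of_le_of_ne (fun r hr => (hJ r).2 (Ideal.mul_mem_left I a hr)) fun h => hb ?_
      rw [h]; exact hab
    have hS := colonSC_shortExact I J a hJ
    have h1 := ih J hIJ i hi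
    have h3 := ih _ (key a ha) i hi
    refine subsingleton_of_forall_eq 0 fun x => ?_
    obtain ⟨y, hy⟩ := Abelian.Ext.contravariant_sequence_exact₂ hS N x
      (@Subsingleton.elim _ h1 _ _)
    rw [← hy, @Subsingleton.elim _ h3 y 0, Abelian.Ext.comp_zero]
  · push Not at hp
    obtain ⟨x, hxm, hxI⟩ : ∃ x ∈ maximalIdeal R, x ∉ I := by
      by_contra! h
      exact hm (le_antisymm (IsLocalRing.le_maximalIdeal hI) h)
    have hJ : ∀ r, r ∈ I ↔ x * r ∈ I := fun r =>
      ⟨fun hr => Ideal.mul_mem_left I x hr, fun h => by_contra fun hr => hp x r hxI hr h⟩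
    have hS := colonSC_shortExact I I x hJ
    have h3 := ih _ (key x hxI) (1 + i) (by omega)
    by_contra ntr
    rw [not_subsingleton_iff_nontrivial] at ntr
    have hxj : x ∈ (Module.annihilator R
        (Abelian.Ext (ModuleCat.of R (R ⧸ I)) N i)).jacobson :=
      (IsLocalRing.maximalIdeal_le_jacobson _) hxm
    refine Submodule.top_ne_pointwise_smul_of_mem_jacobson_annihilator hxj ?_
    rw [eq_comm, eq_top_iff]
    intro y _
    obtain ⟨z, hz⟩ := Abelian.Ext.contravariant_sequence_exact₁ hS N (n₀ := i) y rfl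
      (@Subsingleton.elim _ h3 _ _)
    change (Abelian.Ext.mk₀ (ModuleCat.ofHom (colonF I I x hJ))).comp z _ = y at hz
    rw [colonF_self, Abelian.Ext.mk₀_smul, Abelian.Ext.smul_comp, Abelian.Ext.mk₀_id_comp] at hz
    rw [← hz]
    exact Submodule.smul_mem_pointwise_smul _ _ ⊤ trivial

/-- There is a cyclic module of projective dimension at most `dim R` with `k` as a submodule. -/
lemma exists_quotient_pd [IsNoetherianRing R] [IsLocalRing R] (n : ℕ) (I : Ideal R) (hI : I ≠ ⊤)
    (hdim : ringKrullDim (R ⧸ I) ≤ n) (j : ℕ)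
    (hpd : HasProjectiveDimensionLT (ModuleCat.of R (R ⧸ I)) (j + 1)) :
    ∃ (J : Ideal R) (a : R), (∀ r, r ∈ maximalIdeal R ↔ a * r ∈ J) ∧
      HasProjectiveDimensionLT (ModuleCat.of R (R ⧸ J)) (j + n + 1) := by
  have hnt : Nontrivial (R ⧸ I) := Ideal.Quotient.nontrivial_iff.2 hI
  by_cases hd : ∃ x ∈ maximalIdeal R, Ideal.Quotient.mk I x ∈ nonZeroDivisors (R ⧸ I)
  · obtain ⟨x, hx, hx0⟩ := hd
    have hK : I ⊔ Ideal.span {x} ≠ ⊤ := by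
      intro h
      have : I ⊔ Ideal.span {x} ≤ maximalIdeal R :=
        sup_le (IsLocalRing.le_maximalIdeal hI) ((Ideal.span_singleton_le_iff_mem _).2 hx)
      rw [h, top_le_iff] at this
      exact (maximalIdeal.isMaximal R).ne_top this
    have hnt' : Nontrivial (R ⧸ (I ⊔ Ideal.span {x})) := Ideal.Quotient.nontrivial_iff.2 hK
    have hdim' : ringKrullDim (R ⧸ (I ⊔ Ideal.span {x})) + 1 ≤ n := by
      refine le_trans ?_ hdim
      refine ringKrullDim_succ_le_of_surjective (Ideal.Quotient.factor le_sup_left)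
        (Ideal.Quotient.factor_surjective _) hx0 ?_
      rw [Ideal.Quotient.factor_mk, Ideal.Quotient.eq_zero_iff_mem]
      exact Ideal.mem_sup_right (Ideal.mem_span_singleton_self x)
    have hJ : ∀ r, r ∈ I ↔ x * r ∈ I := fun r =>
      ⟨fun hr => I.mul_mem_left x hr, fun h => by
        rw [← Ideal.Quotient.eq_zero_iff_mem] at h ⊢
        rw [map_mul] at h
        exact (mul_left_mem_nonZeroDivisors_eq_zero_iff hx0).1 h⟩
    have hpd' : HasProjectiveDimensionLT
        (ModuleCat.of R (R ⧸ (I ⊔ Ideal.span {x}))) (j + 1 + 1) :=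
      (colonSC_shortExact I I x hJ).hasProjectiveDimensionLT_X₃ (j + 1) hpd
        (hasProjectiveDimensionLT_of_ge _ (j + 1) _ (by omega))
    have h0 : (0 : WithBot ℕ∞) ≤ ringKrullDim (R ⧸ (I ⊔ Ideal.span {x})) :=
      ringKrullDim_nonneg_of_nontrivial
    cases n with
    | zero =>
      have := (add_le_add_left h0 1).trans hdim'
      norm_num at this
    | succ n =>
      have hn : ringKrullDim (R ⧸ (I ⊔ Ideal.span {x})) ≤ n := by
        have : ((n + 1 : ℕ) : WithBot ℕ∞) = n + 1 := by push_cast; rfl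
        rw [this] at hdim'
        exact (ENat.WithBot.add_le_add_one_right_iff).1 hdim'
      obtain ⟨J, a, hJa, hJp⟩ := exists_quotient_pd n _ hK hn (j + 1) hpd'
      refine ⟨J, a, hJa, ?_⟩
      convert hJp using 1
      omega
  · push Not at hd
    have hdis : Disjoint (((maximalIdeal R).map (Ideal.Quotient.mk I) : Ideal (R ⧸ I)) :
        Set (R ⧸ I)) (nonZeroDivisors (R ⧸ I)) := by
      rw [Set.disjoint_left]
      intro y hy hy'
      obtain ⟨x, hx, rfl⟩ := (Ideal.mem_map_iff_of_surjective _
        Ideal.Quotient.mk_surjective).1 hy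
      exact hd x hx hy'
    obtain ⟨b, hb, hb0⟩ := (Submodule.ne_bot_iff _).1
      (Ideal.bot_lt_annihilator_of_disjoint_nonZeroDivisors hdis).ne'
    obtain ⟨a, rfl⟩ := Ideal.Quotient.mk_surjective b
    refine ⟨I, a, fun r => ⟨fun hr => ?_, fun hr => ?_⟩,
      hasProjectiveDimensionLT_of_ge _ (j + 1) _ (by omega)⟩
    · rw [← Ideal.Quotient.eq_zero_iff_mem, map_mul]
      have := Module.mem_annihilator.1 hb ⟨Ideal.Quotient.mk I r, Ideal.mem_map_of_mem _ hr⟩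
      simpa [Subtype.ext_iff] using this
    · by_contra hru
      have hu : IsUnit r := by simpa using hru
      apply hb0
      rw [Ideal.Quotient.eq_zero_iff_mem]
      exact (Ideal.mul_unit_mem_iff_mem I hu).1 hr

/-- If `k` has finite projective dimension then it is at most `dim R`. -/
lemma pd_residue_le [IsNoetherianRing R] [IsLocalRing R] (d : ℕ) (hdim : ringKrullDim R = d)
    (p : ℕ) (hp : HasProjectiveDimensionLT (ModuleCat.of R (R ⧸ maximalIdeal R)) p) :
    HasProjectiveDimensionLT (ModuleCat.of R (R ⧸ maximalIdeal R)) (d + 1) := by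
  obtain ⟨J, a, hJ, hpd⟩ : ∃ (J : Ideal R) (a : R), (∀ r, r ∈ maximalIdeal R ↔ a * r ∈ J) ∧
      HasProjectiveDimensionLT (ModuleCat.of R (R ⧸ J)) (d + 1) := by
    have hproj : Module.Projective R (R ⧸ (⊥ : Ideal R)) :=
      Module.Projective.of_equiv (Submodule.quotEquivOfEqBot (⊥ : Ideal R) rfl).symm
    have hproj' : Projective (ModuleCat.of R (R ⧸ (⊥ : Ideal R))) :=
      (IsProjective.iff_projective _).1 hproj
    have := exists_quotient_pd d (⊥ : Ideal R) bot_ne_top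
      (by rw [← hdim]; exact (ringKrullDim_eq_of_ringEquiv (RingEquiv.quotientBot R)).le) 0
      inferInstance
    simpa using this
  induction p with
  | zero => exact hasProjectiveDimensionLT_of_ge _ 0 _ (by omega)
  | succ p ih =>
    by_cases hpd' : p ≤ d
    · exact hasProjectiveDimensionLT_of_ge _ (p + 1) _ (by omega)
    refine ih (ModuleCat.hasProjectiveDimensionLT_of_forall_finite _ p fun L hL => ?_)
    have hS := colonSC_shortExact J (maximalIdeal R) a hJ
    have h3 := subsingleton_ext_quotient L p
      (fun i hi => HasProjectiveDimensionLT.subsingleton _ (p + 1) i hi L)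
      (J ⊔ Ideal.span {a}) (1 + p) (by omega)
    have h2 := HasProjectiveDimensionLT.subsingleton (ModuleCat.of R (R ⧸ J)) (d + 1) p
      (by omega) L
    refine subsingleton_of_forall_eq 0 fun x => ?_
    obtain ⟨y, hy⟩ := Abelian.Ext.contravariant_sequence_exact₁ hS L x rfl
      (@Subsingleton.elim _ h3 _ _)
    rw [← hy, @Subsingleton.elim _ h2 y 0, Abelian.Ext.comp_zero]

section Bridge

variable {X Y : ModuleCat.{u} R} (P : ProjectiveResolution X) (n : ℕ)

/-- The submodule of cocycles in degree `n + 1`. -/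
def bridgeCocycles : Submodule R (P.complex.X (n + 1) ⟶ Y) :=
  LinearMap.ker (Linear.leftComp R Y (P.complex.d (n + 2) (n + 1)))

/-- Cocycles map to `Ext`. -/
noncomputable def bridgeMap :
    bridgeCocycles (Y := Y) P n →ₗ[R] Abelian.Ext X Y (n + 1) where
  toFun f := P.extMk f.1 (n + 2) rfl f.2
  map_add' f g := (P.add_extMk f.1 g.1 (n + 2) rfl f.2 g.2).symm
  map_smul' r f := by
    have := P.extMk_comp_mk₀ f.1 (n + 2) rfl f.2 (r • 𝟙 Y)
    rw [← Abelian.Ext.smul_eq_comp_mk₀] at this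
    simp only [RingHom.id_apply]
    rw [this]
    congr 1

lemma bridgeMap_surjective : Function.Surjective (bridgeMap (Y := Y) P n) := by
  intro x
  obtain ⟨f, hf, rfl⟩ := P.extMk_surjective x (n + 2) rfl
  exact ⟨⟨f, hf⟩, rfl⟩

lemma bridgeMap_eq_zero_iff (f : bridgeCocycles (Y := Y) P n) :
    bridgeMap P n f = 0 ↔ ∃ g : P.complex.X n ⟶ Y, P.complex.d (n + 1) n ≫ g = f.1 :=
  P.extMk_eq_zero_iff f.1 (n + 2) rfl f.2 n rfl

/-- The two definitions of `Ext` agree. -/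
lemma exists_bridge (X Y : ModuleCat.{u} R) (n : ℕ) :
    Nonempty ((((Ext R (ModuleCat.{u} R) (n + 1)).obj (Opposite.op X)).obj Y : ModuleCat.{u} R)
      ≃ₗ[R] Abelian.Ext X Y (n + 1)) := by
  let P := projectiveResolution X
  let K := P.complex.linearYonedaObj R Y
  let S := K.sc' n (n + 1) (n + 2)
  let e1 := P.isoExt (R := R) (n + 1) Y
  let e2 : K.homology (n + 1) ≅ S.homology :=
    K.homologyIsoSc' n (n + 1) (n + 2) (by simp) (by simp)
  let e3 := S.moduleCatHomologyIso
  let e4 := (e1 ≪≫ e2 ≪≫ e3).toLinearEquiv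
  let φ : LinearMap.ker S.g.hom →ₗ[R] Abelian.Ext X Y (n + 1) := bridgeMap P n
  have hφ : LinearMap.range S.moduleCatToCycles = LinearMap.ker φ := by
    ext f
    rw [LinearMap.mem_ker, LinearMap.mem_range]
    refine Iff.trans ?_ (bridgeMap_eq_zero_iff P n f).symm
    constructor
    · rintro ⟨g, rfl⟩
      exact ⟨g, rfl⟩
    · rintro ⟨g, hg⟩
      exact ⟨g, Subtype.ext hg⟩
  let e5 : (LinearMap.ker S.g.hom ⧸ LinearMap.range S.moduleCatToCycles) ≃ₗ[R]
      Abelian.Ext X Y (n + 1) := (Submodule.quotEquivOfEq _ _ hφ).trans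
    (LinearMap.quotKerEquivOfSurjective φ (bridgeMap_surjective P n))
  exact ⟨e4.trans e5⟩

end Bridge

/-- The frozen notion of finite projective dimension implies the categorical one. -/
lemma projDimLE_hasPD (n : ℕ) (M : Type u) [AddCommGroup M] [Module R M]
    (h : ProjDimLE R n M) : HasProjectiveDimensionLT (ModuleCat.of R M) (n + 1) := by
  induction n generalizing M with
  | zero =>
    have := h.1
    have : Projective (ModuleCat.of R M) := (IsProjective.iff_projective _).1 this
    infer_instance
  | succ n ih =>
    obtain ⟨k, f, hf, hk⟩ := h
    have h1 := ih _ hk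
    have hS := LinearMap.shortExact_shortComplexKer hf
    have h2 : Projective (ModuleCat.of R (Fin k → R)) :=
      (IsProjective.iff_projective _).1 inferInstance
    exact hS.hasProjectiveDimensionLT_X₃ (n + 1) h1
      (hasProjectiveDimensionLT_of_ge _ 1 _ (by omega))

/-- Dimension shifting: `Ext^{n+1}(M, N)` is `Ext^1` of an `n`-th syzygy. -/
lemma exists_syzygy [IsNoetherianRing R] (N : ModuleCat.{u} R) (n : ℕ) (M : ModuleCat.{u} R)
    [Module.Finite R M] : ∃ (L : ModuleCat.{u} R), Module.Finite R L ∧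
      Nonempty (Abelian.Ext L N 1 ≃ₗ[R] Abelian.Ext M N (n + 1)) := by
  induction n generalizing M with
  | zero => exact ⟨M, inferInstance, ⟨LinearEquiv.refl R _⟩⟩
  | succ n ih =>
    obtain ⟨F, _, _, _, _, f, surjf⟩ := Module.exists_finite_presentation R M
    have hS := LinearMap.shortExact_shortComplexKer surjf
    have hfin : Module.Finite R f.shortComplexKer.X₁ :=
      inferInstanceAs (Module.Finite R (LinearMap.ker f))
    obtain ⟨L, hL, ⟨e⟩⟩ := ih f.shortComplexKer.X₁
    refine ⟨L, hL, ⟨e.trans (LinearEquiv.ofBijective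
      (hS.extClass.precompOfLinear R N (add_comm 1 (n + 1))) ⟨?_, ?_⟩)⟩⟩
    · rw [injective_iff_map_eq_zero]
      intro x hx
      obtain ⟨y, hy⟩ := Abelian.Ext.contravariant_sequence_exact₁ hS N x (add_comm 1 (n + 1)) hx
      rw [← hy, Abelian.Ext.eq_zero_of_projective y, Abelian.Ext.comp_zero]
    · exact precomp_extClass_surjective_of_projective_X₂ N hS (n + 1)

lemma ext_torsion [IsLocalRing R] (N : ModuleCat.{u} R) (n : ℕ) (r : R)
    (hr : r ∈ maximalIdeal R)
    (x : Abelian.Ext (ModuleCat.of R (R ⧸ maximalIdeal R)) N n) : r • x = 0 := by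
  have h : r • 𝟙 (ModuleCat.of R (R ⧸ maximalIdeal R)) = 0 := by
    ext
    change r • (1 : R ⧸ maximalIdeal R) = 0
    rw [Algebra.smul_def, mul_one]
    exact Ideal.Quotient.eq_zero_iff_mem.2 hr
  rw [← Abelian.Ext.mk₀_id_comp x, ← Abelian.Ext.smul_comp, ← Abelian.Ext.mk₀_smul, h,
    Abelian.Ext.mk₀_zero, Abelian.Ext.zero_comp]

/-- `k` is a retract of every nonzero module killed by the maximal ideal. -/
lemma exists_retract [IsLocalRing R] (E : ModuleCat.{u} R) [Nontrivial E]
    (hE : ∀ r ∈ maximalIdeal R, ∀ x : E, r • x = 0) :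
    Nonempty (Retract (ModuleCat.of R (R ⧸ maximalIdeal R)) E) := by
  have ht : Module.IsTorsionBySet R E (maximalIdeal R : Set R) := fun x r => hE r.1 r.2 x
  let _ : Field (R ⧸ maximalIdeal R) := Ideal.Quotient.field _
  let _ : Module (R ⧸ maximalIdeal R) E := ht.module
  have : IsScalarTower R (R ⧸ maximalIdeal R) E := ht.isScalarTower
  obtain ⟨e, he⟩ := exists_ne (0 : E)
  let f : (R ⧸ maximalIdeal R) →ₗ[R ⧸ maximalIdeal R] E := LinearMap.toSpanSingleton _ _ e
  have hf : LinearMap.ker f = ⊥ := LinearMap.ker_toSpanSingleton _ he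
  obtain ⟨g, hg⟩ := f.exists_leftInverse_of_injective hf
  exact ⟨⟨ModuleCat.ofHom (f.restrictScalars R), ModuleCat.ofHom (g.restrictScalars R), by
    rw [← ModuleCat.ofHom_comp, ← LinearMap.restrictScalars_comp, hg]; rfl⟩⟩

end Helpers

/-- Let `(R, 𝔪, k)` be a commutative noetherian Cohen–Macaulay local ring of Krull dimension
`d` (Cohen–Macaulayness is expressed by the vanishing `Ext_R^i(k, R) = 0` for all `i < d`).
If for every finitely generated `R`-module `M` the `R`-module `Ext_R^1(M, R)` has finite
projective dimension, then `Ext_R^{d+1}(k, R) = 0`, i.e. `R` is Gorenstein. -/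
theorem gorenstein_of_ext_one_finiteProjDim (R : Type u) [CommRing R] [IsNoetherianRing R]
    [IsLocalRing R] (d : ℕ) (hdim : ringKrullDim R = d)
    (hCM : ∀ i < d, Subsingleton (ExtMod R i (IsLocalRing.ResidueField R) R))
    (h : ∀ (M : Type u) [AddCommGroup M] [Module R M] [Module.Finite R M],
      HasFiniteProjDim R (ExtMod R 1 M R)) :
    Subsingleton (ExtMod R (d + 1) (IsLocalRing.ResidueField R) R) := by

  let k := ModuleCat.of R (R ⧸ IsLocalRing.maximalIdeal R)
  let N := ModuleCat.of R R
  have hkfin : Module.Finite R k :=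
    inferInstanceAs (Module.Finite R (R ⧸ IsLocalRing.maximalIdeal R))
  have hNfin : Module.Finite R N := inferInstanceAs (Module.Finite R R)
  obtain ⟨e₀⟩ := exists_bridge k N d
  obtain ⟨L, hL, ⟨e₁⟩⟩ := exists_syzygy N d k
  obtain ⟨e₂⟩ := exists_bridge L N 0
  let e : ExtMod R 1 L R ≃ₗ[R] Abelian.Ext k N (d + 1) := e₂.trans e₁
  refine @Equiv.subsingleton _ _ e₀.toEquiv ?_
  by_contra hnt
  rw [not_subsingleton_iff_nontrivial] at hnt
  have hE : Nontrivial (ExtMod R 1 L R) := e.toEquiv.nontrivial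
  obtain ⟨ρ⟩ := exists_retract (ExtMod R 1 L R) (fun r hr x => by
    apply e.injective
    rw [map_smul, map_zero]
    exact ext_torsion N (d + 1) r hr (e x))
  obtain ⟨n, hn⟩ := h L
  have h1 : HasProjectiveDimensionLT (ExtMod R 1 L R) (n + 1) := projDimLE_hasPD n _ hn
  have h2 := pd_residue_le d hdim (n + 1) (ρ.hasProjectiveDimensionLT (n + 1))
  have h3 := HasProjectiveDimensionLT.subsingleton k (d + 1) (d + 1) le_rfl N
  exact not_subsingleton _ h3
end
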